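/- The polynomial x^24 + 82x^23 - 996x^22 + 968x^21 + 1051x^20 + 1422x^19 - 96x^18 - 24912x^17 + 7896x^16 + 16722x^15 + 28844x^14 + 13658x^13 - 114024x^12 - 13658x^11 + 28844x^10 - 16722x^9 + 7896x^8 + 24912x^7 - 96x^6 - 1422x^5 + 1051x^4 - 968x^3 - 996x^2 - 82x + 1 is irreducible over ℚ. -/

import Mathlib

open Polynomial

/-- The degree 24 polynomial arising as `irr(r(√-13), ℚ)`. -/
noncomputable def rrPoly : ℚ[X] :=
  X ^ 24 + 82 * X ^ 23 - 996 * X ^ 22 + 968 * X ^ 21 + 1051 * X ^ 20 + 1422 * X ^ 19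
    - 96 * X ^ 18 - 24912 * X ^ 17 + 7896 * X ^ 16 + 16722 * X ^ 15 + 28844 * X ^ 14
    + 13658 * X ^ 13 - 114024 * X ^ 12 - 13658 * X ^ 11 + 28844 * X ^ 10 - 16722 * X ^ 9
    + 7896 * X ^ 8 + 24912 * X ^ 7 - 96 * X ^ 6 - 1422 * X ^ 5 + 1051 * X ^ 4
    - 968 * X ^ 3 - 996 * X ^ 2 - 82 * X + 1

/-!
Put `f = rrPoly`. Over `ℚ(√13)` the polynomial splits as `f = (P + √13 Q) (P - √13 Q)` with integral
`P` and `Q`, that is, `f = P ^ 2 - 13 Q ^ 2`. Let `f = A B` with monic integral `A` and `B`.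

Modulo `61` the polynomial `f` is a product of eight irreducible cubics, so `3 ∣ deg A`.

Modulo `13` we have `A B ≡ P ^ 2`, where `P` is a product of three irreducible quartics and is prime
to `Q`. If an irreducible `q` divided both `A` and `B` modulo `13`, it would divide `P`, and then
`13 Q ^ 2 = P ^ 2 - A B` would lie in the square of the ideal `(13, q)`, which forces `q ∣ Q`
modulo `13`. So `A` and `B` are coprime modulo `13`; hence `A` is, up to a constant, the square of a
divisor of `P`, and `8 ∣ deg A`.

Therefore `24 ∣ deg A`, and one of the two factors is constant.
-/

section Degree

variable {K : Type*} [Field K] {n : ℕ}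

theorem dvd_natDegree_of_forall_irreducible {a : K[X]}
    (h : ∀ q, Irreducible q → q ∣ a → n ∣ q.natDegree) : n ∣ a.natDegree := by
  induction a using WfDvdMonoid.induction_on_irreducible with
  | zero => simp
  | unit u hu => simp [natDegree_eq_zero_of_isUnit hu]
  | mul b q hb hq ih =>
    rw [natDegree_mul hq.ne_zero hb]
    exact dvd_add (h q hq (dvd_mul_right q b)) (ih fun r hr hrb ↦ h r hr (hrb.mul_left q))

theorem dvd_natDegree_of_dvd_prod {l : List K[X]} (hirr : ∀ g ∈ l, Irreducible g)
    (hdeg : ∀ g ∈ l, n ∣ g.natDegree) {a : K[X]} (ha : a ∣ l.prod) : n ∣ a.natDegree := by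
  refine dvd_natDegree_of_forall_irreducible fun q hq hqa ↦ ?_
  obtain ⟨g, hg, hqg⟩ := hq.prime.dvd_prod_iff.mp (hqa.trans ha)
  have hassoc : Associated q g := hq.associated_of_dvd (hirr g hg) hqg
  rw [natDegree_eq_of_degree_eq (degree_eq_degree_of_associated hassoc)]
  exact hdeg g hg

theorem mul_dvd_natDegree_of_mul_eq_pow {k : ℕ} (hk : k ≠ 0) {a b c : K[X]}
    (hc : ∀ d, d ∣ c → n ∣ d.natDegree) (hab : IsCoprime a b) (h : a * b = c ^ k) :
    k * n ∣ a.natDegree := by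
  obtain ⟨d, hd⟩ := exists_associated_pow_of_mul_eq_pow' hab h
  have hdc : d ∣ c :=
    (UniqueFactorizationMonoid.pow_dvd_pow_iff_dvd hk).mp (hd.dvd.trans ⟨b, h.symm⟩)
  rw [← natDegree_eq_of_degree_eq (degree_eq_degree_of_associated hd), natDegree_pow]
  exact mul_dvd_mul_left k (hc d hdc)

end Degree

section Reduction

variable {R K : Type*} [CommRing R] {p : R}

theorem exists_eq_add_C_mul_of_map_eq [CommRing K] {φ : R →+* K}
    (hker : RingHom.ker φ = Ideal.span {p}) {a b : R[X]} (h : a.map φ = b.map φ) :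
    ∃ c, a = b + C p * c := by
  have hmem : a - b ∈ RingHom.ker (mapRingHom φ) := by
    simp [RingHom.mem_ker, h]
  rw [ker_mapRingHom, hker, Ideal.map_span, Set.image_singleton,
    Ideal.mem_span_singleton] at hmem
  obtain ⟨c, hc⟩ := hmem
  exact ⟨c, by rw [← hc, add_sub_cancel]⟩

theorem exists_eq_mul_add_C_mul_of_map_dvd [CommRing K] {φ : R →+* K}
    (hφ : Function.Surjective φ) (hker : RingHom.ker φ = Ideal.span {p}) {q a : R[X]}
    (h : q.map φ ∣ a.map φ) : ∃ b c, a = q * b + C p * c := by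
  obtain ⟨b', hb'⟩ := h
  obtain ⟨b, rfl⟩ := map_surjective φ hφ b'
  rw [← Polynomial.map_mul] at hb'
  obtain ⟨c, hc⟩ := exists_eq_add_C_mul_of_map_eq hker hb'
  exact ⟨b, c, hc⟩

theorem map_dvd_map_of_mul_eq_sq_add [IsDomain R] [CommRing K] [IsDomain K] {φ : R →+* K}
    (hφ : Function.Surjective φ) (hker : RingHom.ker φ = Ideal.span {p}) (hp : p ≠ 0)
    {a b c r q : R[X]} (h : a * b = c ^ 2 + C p * r) (hq : q.map φ ≠ 0)
    (ha : q.map φ ∣ a.map φ) (hb : q.map φ ∣ b.map φ) (hc : q.map φ ∣ c.map φ) :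
    q.map φ ∣ r.map φ := by
  obtain ⟨a₁, a₂, rfl⟩ := exists_eq_mul_add_C_mul_of_map_dvd hφ hker ha
  obtain ⟨b₁, b₂, rfl⟩ := exists_eq_mul_add_C_mul_of_map_dvd hφ hker hb
  obtain ⟨c₁, c₂, rfl⟩ := exists_eq_mul_add_C_mul_of_map_dvd hφ hker hc
  have hφp : φ p = 0 := RingHom.mem_ker.mp (hker ▸ Ideal.mem_span_singleton_self p)
  set m := a₁ * b₂ + a₂ * b₁ - 2 * c₁ * c₂ with hm
  set s := a₂ * b₂ - c₂ ^ 2 with hs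
  have hsq : q ^ 2 * (a₁ * b₁ - c₁ ^ 2) = C p * (r - q * m - C p * s) := by
    rw [hm, hs]
    linear_combination h
  have hzero : (a₁ * b₁ - c₁ ^ 2).map φ = (0 : R[X]).map φ := by
    have hmap := congr(map φ $hsq)
    rw [Polynomial.map_mul, Polynomial.map_mul, map_C, hφp, C_0, zero_mul,
      Polynomial.map_pow] at hmap
    rw [Polynomial.map_zero]
    exact (mul_eq_zero.mp hmap).resolve_left (pow_ne_zero 2 hq)
  obtain ⟨t, ht⟩ := exists_eq_add_C_mul_of_map_eq hker hzero
  have hr : r = q * (q * t + m) + C p * s := by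
    refine mul_left_cancel₀ (C_ne_zero.mpr hp) ?_
    linear_combination -hsq + q ^ 2 * ht
  rw [hr, Polynomial.map_add, Polynomial.map_mul, Polynomial.map_mul, map_C, hφp, C_0, zero_mul,
    add_zero]
  exact dvd_mul_right _ _

theorem map_mul_map_eq_sq [CommRing K] {φ : R →+* K} (hp : φ p = 0) {a b c r : R[X]}
    (h : a * b = c ^ 2 + C p * r) : a.map φ * b.map φ = c.map φ ^ 2 := by
  simpa [hp] using congr(map φ $h)

theorem isCoprime_map_of_mul_eq_sq_add [IsDomain R] [Field K] {φ : R →+* K}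
    (hφ : Function.Surjective φ) (hker : RingHom.ker φ = Ideal.span {p}) (hp : p ≠ 0)
    {a b c r : R[X]} (h : a * b = c ^ 2 + C p * r) (hcr : IsCoprime (c.map φ) (r.map φ)) :
    IsCoprime (a.map φ) (b.map φ) := by
  have hφp : φ p = 0 := RingHom.mem_ker.mp (hker ▸ Ideal.mem_span_singleton_self p)
  have hno_common : ∀ q : K[X], Prime q → q ∣ a.map φ → ¬ q ∣ b.map φ := by
    intro q hq ha hb
    obtain ⟨q, rfl⟩ := map_surjective φ hφ q
    have hc : q.map φ ∣ c.map φ :=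
      hq.dvd_of_dvd_pow (map_mul_map_eq_sq hφp h ▸ ha.mul_right (b.map φ))
    have hr := map_dvd_map_of_mul_eq_sq_add hφ hker hp h hq.ne_zero ha hb hc
    exact hq.not_isUnit (hcr.isUnit_of_dvd' hc hr)
  refine isCoprime_of_prime_dvd (fun ⟨ha, hb⟩ ↦ ?_) hno_common
  exact hno_common X prime_X (ha ▸ dvd_zero X) (hb ▸ dvd_zero X)

end Reduction

section Quartic

/-- The monic quartic with the given lower coefficients, in descending order; the degree four
counterpart of `Cubic.toPoly`. -/
noncomputable def monicQuartic {R : Type*} [Semiring R] (a b c d : R) : R[X] :=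
  X ^ 4 + C a * X ^ 3 + C b * X ^ 2 + C c * X + C d

theorem monicQuartic_monic {R : Type*} [Semiring R] (a b c d : R) :
    (monicQuartic a b c d).Monic := by
  unfold monicQuartic
  monicity!

theorem natDegree_monicQuartic {R : Type*} [Semiring R] [Nontrivial R] (a b c d : R) :
    (monicQuartic a b c d).natDegree = 4 := by
  unfold monicQuartic
  compute_degree!

theorem eq_X_sq_add_of_natDegree_eq_two {R : Type*} [Semiring R] {q : R[X]} (hq : q.Monic)
    (hdeg : q.natDegree = 2) : q = X ^ 2 + C (q.coeff 1) * X + C (q.coeff 0) := by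
  have hlead : q.coeff 2 = 1 := hdeg ▸ hq
  have hquad := eq_quadratic_of_degree_le_two (natDegree_le_iff_degree_le.mp hdeg.le)
  rwa [hlead, C_1, one_mul] at hquad

theorem monicQuartic_inj {R : Type*} [Semiring R] {a b c d a' b' c' d' : R} :
    monicQuartic a b c d = monicQuartic a' b' c' d' ↔ a = a' ∧ b = b' ∧ c = c' ∧ d = d' := by
  refine ⟨fun h ↦ ?_, fun ⟨ha, hb, hc, hd⟩ ↦ by rw [ha, hb, hc, hd]⟩
  have hcoeff (i : ℕ) := congr(coeff $h i)
  simpa [monicQuartic, coeff_X, coeff_C] using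
    And.intro (hcoeff 3) (And.intro (hcoeff 2) (And.intro (hcoeff 1) (hcoeff 0)))

theorem quadratic_mul_quadratic {R : Type*} [CommSemiring R] (s t u v : R) :
    (X ^ 2 + C s * X + C t) * (X ^ 2 + C u * X + C v) =
      monicQuartic (s + u) (t + s * u + v) (s * v + t * u) (t * v) := by
  simp only [monicQuartic, C_add, C_mul]
  ring

theorem irreducible_monicQuartic {R : Type*} [CommRing R] [IsDomain R] {a b c d : R}
    (hroot : ∀ x, x ^ 4 + a * x ^ 3 + b * x ^ 2 + c * x + d ≠ 0)
    (hquad : ∀ s u, s + u = a → ∀ t v, t + s * u + v = b → s * v + t * u = c → t * v ≠ d) :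
    Irreducible (monicQuartic a b c d) := by
  have hmonic := monicQuartic_monic a b c d
  have hdeg := natDegree_monicQuartic a b c d
  rw [hmonic.irreducible_iff_natDegree']
  refine ⟨fun h ↦ by simp [h] at hdeg, fun f g hf hg hfg hmem ↦ ?_⟩
  have hadd : f.natDegree + g.natDegree = 4 := by rw [← hf.natDegree_mul hg, hfg, hdeg]
  rw [hdeg, Finset.mem_Ioc] at hmem
  obtain hg1 | hg2 : g.natDegree = 1 ∨ g.natDegree = 2 := by omega
  · have hzero : (monicQuartic a b c d).eval (-g.coeff 0) = 0 := by
      rw [← hfg, eval_mul, hg.eq_X_add_C hg1]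
      simp
    exact hroot (-g.coeff 0) (by simpa [monicQuartic] using hzero)
  · have hf2 : f.natDegree = 2 := by omega
    rw [eq_X_sq_add_of_natDegree_eq_two hf hf2, eq_X_sq_add_of_natDegree_eq_two hg hg2,
      quadratic_mul_quadratic, monicQuartic_inj] at hfg
    obtain ⟨ha, hb, hc, hd⟩ := hfg
    exact hquad _ _ ha _ _ hb hc hd

end Quartic

namespace rrPoly

/-- The rational part `P` of the factor `P + √13 Q` of `rrPoly` over `ℚ(√13)`. -/
noncomputable def ratPart : ℤ[X] :=
  X ^ 12 + 41 * X ^ 11 + 124 * X ^ 10 + 275 * X ^ 9 + 250 * X ^ 8 + 236 * X ^ 7 + 276 * X ^ 6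
    - 236 * X ^ 5 + 250 * X ^ 4 - 275 * X ^ 3 + 124 * X ^ 2 - 41 * X + 1

/-- The coefficient `Q` of `√13` in the factor `P + √13 Q` of `rrPoly` over `ℚ(√13)`. -/
noncomputable def surdPart : ℤ[X] :=
  15 * X ^ 11 + 25 * X ^ 10 + 75 * X ^ 9 + 100 * X ^ 8 + 50 * X ^ 7 + 40 * X ^ 6 - 50 * X ^ 5
    + 100 * X ^ 4 - 75 * X ^ 3 + 25 * X ^ 2 - 15 * X

/-- The integral model of `rrPoly`, as the norm `P ^ 2 - 13 Q ^ 2` of its factor over `ℚ(√13)`. -/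
noncomputable def intModel : ℤ[X] :=
  ratPart ^ 2 - 13 * surdPart ^ 2

theorem map_intModel : intModel.map (algebraMap ℤ ℚ) = rrPoly := by
  simp only [intModel, ratPart, surdPart, rrPoly, Polynomial.map_add, Polynomial.map_sub,
    Polynomial.map_mul, Polynomial.map_pow, map_X, Polynomial.map_ofNat, Polynomial.map_one]
  ring

theorem intModel_monic : intModel.Monic := by
  unfold intModel ratPart surdPart
  monicity!

theorem natDegree_intModel : intModel.natDegree = 24 := by
  unfold intModel ratPart surdPart
  compute_degree!

instance fact_prime_thirteen : Fact (Nat.Prime 13) := ⟨by norm_num⟩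

instance fact_prime_sixtyOne : Fact (Nat.Prime 61) := ⟨by norm_num⟩

/-- The irreducible factors of `rrPoly` modulo `61`. -/
def cubicFactors : List (Cubic (ZMod 61)) :=
  [⟨1, 11, -23, 7⟩, ⟨1, -1, 22, 23⟩, ⟨1, 12, 19, 26⟩, ⟨1, 6, -23, -19⟩, ⟨1, 2, -26, -16⟩,
    ⟨1, 17, -30, -12⟩, ⟨1, 7, -8, -8⟩, ⟨1, 28, 24, -5⟩]

theorem map_intModel_sixtyOne :
    intModel.map (Int.castRingHom (ZMod 61)) = (cubicFactors.map Cubic.toPoly).prod := by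
  simp only [intModel, ratPart, surdPart, cubicFactors, Cubic.toPoly, List.map_cons, List.map_nil,
    List.prod_cons, List.prod_nil, Polynomial.map_add, Polynomial.map_sub, Polynomial.map_mul,
    Polynomial.map_pow, map_X, Polynomial.map_ofNat, Polynomial.map_one, map_neg, map_ofNat,
    map_one]
  reduce_mod_char
  ring_nf
  reduce_mod_char

theorem natDegree_of_mem_cubicFactors {c : Cubic (ZMod 61)} (hc : c ∈ cubicFactors) :
    c.toPoly.natDegree = 3 :=
  Cubic.natDegree_of_a_ne_zero ((by decide : ∀ c ∈ cubicFactors, c.a ≠ 0) c hc)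

theorem irreducible_of_mem_cubicFactors {c : Cubic (ZMod 61)} (hc : c ∈ cubicFactors) :
    Irreducible c.toPoly := by
  have hroot : ∀ c ∈ cubicFactors, ∀ x, c.a * x ^ 3 + c.b * x ^ 2 + c.c * x + c.d ≠ 0 := by
    decide +kernel
  refine irreducible_of_degree_le_three_of_not_isRoot ?_ fun x ↦ ?_
  · simp [natDegree_of_mem_cubicFactors hc]
  · simpa [Cubic.toPoly] using hroot c hc x

/-- The irreducible factors of `ratPart` modulo `13`. -/
noncomputable def quarticFactors : List (ZMod 13)[X] :=
  [monicQuartic (-1) 1 1 1, monicQuartic 1 3 (-1) 1, monicQuartic 2 4 (-2) 1]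

theorem map_ratPart_thirteen :
    ratPart.map (Int.castRingHom (ZMod 13)) = quarticFactors.prod := by
  simp only [ratPart, quarticFactors, monicQuartic, List.prod_cons, List.prod_nil,
    Polynomial.map_add, Polynomial.map_sub, Polynomial.map_mul, Polynomial.map_pow, map_X,
    Polynomial.map_ofNat, Polynomial.map_one, map_neg, map_ofNat, map_one]
  reduce_mod_char
  ring_nf
  reduce_mod_char

theorem natDegree_of_mem_quarticFactors : ∀ g ∈ quarticFactors, g.natDegree = 4 := by
  simp [quarticFactors, natDegree_monicQuartic]

theorem irreducible_of_mem_quarticFactors : ∀ g ∈ quarticFactors, Irreducible g := by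
  simp only [quarticFactors, List.forall_mem_cons]
  refine ⟨?_, ?_, ?_, by simp⟩ <;>
    exact irreducible_monicQuartic (by decide +kernel) (by decide +kernel)

theorem isCoprime_ratPart_surdPart :
    IsCoprime (ratPart.map (Int.castRingHom (ZMod 13)))
      (surdPart.map (Int.castRingHom (ZMod 13))) := by
  refine ⟨6 * X ^ 10 + 5 * X ^ 9 + 3 * X ^ 8 + X ^ 7 - X ^ 6 + 6 * X ^ 5 + 6 * X ^ 4 - 5 * X ^ 3
      + 5 * X ^ 2 - 2 * X + 1,
    -3 * X ^ 11 + 3 * X ^ 10 + 2 * X ^ 9 + 5 * X ^ 8 + 3 * X ^ 7 + 2 * X ^ 6 - 6 * X ^ 5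
      + 4 * X ^ 4 + 6 * X ^ 3 + 3 * X ^ 2 - 4 * X - 2, ?_⟩
  simp only [ratPart, surdPart, Polynomial.map_add, Polynomial.map_sub, Polynomial.map_mul,
    Polynomial.map_pow, map_X, Polynomial.map_ofNat, Polynomial.map_one]
  reduce_mod_char
  ring_nf
  reduce_mod_char

theorem three_dvd_natDegree {A B : ℤ[X]} (hA : A.Monic) (h : A * B = intModel) :
    3 ∣ A.natDegree := by
  rw [← hA.natDegree_map (Int.castRingHom (ZMod 61))]
  refine dvd_natDegree_of_dvd_prod (l := cubicFactors.map Cubic.toPoly)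
    (List.forall_mem_map.mpr fun c hc ↦ irreducible_of_mem_cubicFactors hc)
    (List.forall_mem_map.mpr fun c hc ↦ (natDegree_of_mem_cubicFactors hc).symm.dvd) ?_
  rw [← map_intModel_sixtyOne, ← h]
  exact Polynomial.map_dvd _ (dvd_mul_right A B)

theorem eight_dvd_natDegree {A B : ℤ[X]} (hA : A.Monic) (h : A * B = intModel) :
    8 ∣ A.natDegree := by
  set φ := Int.castRingHom (ZMod 13)
  have hAB : A * B = ratPart ^ 2 + C ((13 : ℕ) : ℤ) * -surdPart ^ 2 := by
    rw [h, intModel, Nat.cast_ofNat, C_ofNat]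
    ring
  have hcop : IsCoprime (A.map φ) (B.map φ) :=
    isCoprime_map_of_mul_eq_sq_add (ZMod.ringHom_surjective φ) (ZMod.ker_intCastRingHom 13)
      (by norm_num) hAB (by simpa using isCoprime_ratPart_surdPart.pow_right.neg_right)
  have hdvd : ∀ d, d ∣ ratPart.map φ → 4 ∣ d.natDegree := fun d hd ↦
    dvd_natDegree_of_dvd_prod irreducible_of_mem_quarticFactors
      (fun g hg ↦ (natDegree_of_mem_quarticFactors g hg).symm.dvd) (map_ratPart_thirteen ▸ hd)
  rw [← hA.natDegree_map φ]
  exact mul_dvd_natDegree_of_mul_eq_pow two_ne_zero hdvd hcop (map_mul_map_eq_sq (by decide) hAB)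

theorem irreducible_intModel : Irreducible intModel := by
  rw [intModel_monic.irreducible_iff_natDegree]
  refine ⟨fun h ↦ by simpa [h] using natDegree_intModel, fun A B hA hB hAB ↦ ?_⟩
  have h24 : 24 ∣ A.natDegree :=
    (by decide : Nat.Coprime 3 8).mul_dvd_of_dvd_of_dvd (three_dvd_natDegree hA hAB)
      (eight_dvd_natDegree hA hAB)
  have hdeg : A.natDegree + B.natDegree = 24 := by
    rw [← hA.natDegree_mul hB, hAB, natDegree_intModel]
  omega

end rrPoly

/-- The polynomial `rrPoly` is irreducible over `ℚ`. -/
theorem rrPoly_irreducible : Irreducible rrPoly := by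
  rw [← rrPoly.map_intModel]
  exact rrPoly.intModel_monic.irreducible_iff_irreducible_map_fraction_map.mp
    rrPoly.irreducible_intModel
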